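/- Let $B = [0,L_1]\times[0,L_2]$, let $\mathcal{H}$ be a smooth second-order density with $x$-slots in $\mathbb{R}^n$, and let $x:\mathbb{R}\times B\to\mathbb{R}^n$ be smooth. Let $\mathcal{J}^{\alpha\beta}, \mathcal{R}^{\alpha\beta}, \mathcal{G}^\alpha_\xi : \mathbb{R}\times B \to \mathbb{R}$ ($\alpha,\beta = 1,\dots,n$, $\xi = 1,\dots,l$) be smooth with $\mathcal{J}^{\alpha\beta} = -\mathcal{J}^{\beta\alpha}$ pointwise, and let $u^\xi:\mathbb{R}\to\mathbb{R}$ be lumped inputs. Suppose $x$ satisfies $\dot{x}^\alpha = (\mathcal{J}^{\alpha\beta}-\mathcal{R}^{\alpha\beta})\,\delta_\beta\mathcal{H}[x] + \mathcal{G}^\alpha_\xi u^\xi$ on $B$, define the output densities $y_\xi = \mathcal{G}^\alpha_\xi\,\delta_\alpha\mathcal{H}[x]$, and suppose that for every $t$ all boundary contributions vanish, i.e. on the edges $z^1\in\{0,L_1\}$: $\dot{x}^\alpha(\mathcal{H}^{[10]}_\alpha - \partial_1\mathcal{H}^{[20]}_\alpha - \partial_2\mathcal{H}^{[11]}_\alpha)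 + \dot{x}^\alpha_{[10]}\mathcal{H}^{[20]}_\alpha = 0$, on the edges $z^2\in\{0,L_2\}$: $\dot{x}^\alpha(\mathcal{H}^{[01]}_\alpha - \partial_2\mathcal{H}^{[02]}_\alpha - \partial_1\mathcal{H}^{[11]}_\alpha) + \dot{x}^\alpha_{[01]}\mathcal{H}^{[02]}_\alpha = 0$, and $\dot{x}^\alpha\mathcal{H}^{[11]}_\alpha = 0$ at the four corners of $B$. Then $\frac{d}{dt}\iint_B\mathcal{H}[x]\,dz^1dz^2 = -\iint_B \delta_\alpha\mathcal{H}[x]\,\mathcal{R}^{\alpha\beta}\,\delta_\beta\mathcal{H}[x]\,dz^1dz^2 + \iint_B u^\xi y_\xi\,dz^1dz^2$. -/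

import Mathlib

open MeasureTheory

/-- The jet space `(z¹, z², x, x_[10], x_[01], x_[20], x_[11], x_[02])`. -/
abbrev Jet2 (n : ℕ) :=
  ℝ × ℝ × (Fin n → ℝ) × (Fin n → ℝ) × (Fin n → ℝ) × (Fin n → ℝ) × (Fin n → ℝ) × (Fin n → ℝ)

/-- Time derivative of a field `f(t,z¹,z²)`. -/
noncomputable def pt2 {E : Type*} [NormedAddCommGroup E] [NormedSpace ℝ E]
    (f : ℝ → ℝ → ℝ → E) : ℝ → ℝ → ℝ → E := fun t a b => deriv (fun s => f s a b) t

/-- Derivative `∂₁` with respect to `z¹`. -/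
noncomputable def dz1 {E : Type*} [NormedAddCommGroup E] [NormedSpace ℝ E]
    (f : ℝ → ℝ → ℝ → E) : ℝ → ℝ → ℝ → E := fun t a b => deriv (fun s => f t s b) a

/-- Derivative `∂₂` with respect to `z²`. -/
noncomputable def dz2 {E : Type*} [NormedAddCommGroup E] [NormedSpace ℝ E]
    (f : ℝ → ℝ → ℝ → E) : ℝ → ℝ → ℝ → E := fun t a b => deriv (fun s => f t a s) b

/-- Second-order jet of the field `x` at `(t, z¹, z²)`. -/
noncomputable def jet2 {n : ℕ} (x : ℝ → ℝ → ℝ → Fin n → ℝ) (t a b : ℝ) : Jet2 n :=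
  (a, b, x t a b, dz1 x t a b, dz2 x t a b,
    dz1 (dz1 x) t a b, dz1 (dz2 x) t a b, dz2 (dz2 x) t a b)

/-- Composed partial derivative `(∂H/∂x^α)[x]`. -/
noncomputable def sl00 {n : ℕ} (H : Jet2 n → ℝ) (x : ℝ → ℝ → ℝ → Fin n → ℝ)
    (α : Fin n) : ℝ → ℝ → ℝ → ℝ :=
  fun t a b => fderiv ℝ H (jet2 x t a b) (0, 0, Pi.single α 1, 0, 0, 0, 0, 0)

/-- Composed partial derivative `(∂H/∂x^α_[10])[x]`. -/
noncomputable def sl10 {n : ℕ} (H : Jet2 n → ℝ) (x : ℝ → ℝ → ℝ → Fin n → ℝ)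
    (α : Fin n) : ℝ → ℝ → ℝ → ℝ :=
  fun t a b => fderiv ℝ H (jet2 x t a b) (0, 0, 0, Pi.single α 1, 0, 0, 0, 0)

/-- Composed partial derivative `(∂H/∂x^α_[01])[x]`. -/
noncomputable def sl01 {n : ℕ} (H : Jet2 n → ℝ) (x : ℝ → ℝ → ℝ → Fin n → ℝ)
    (α : Fin n) : ℝ → ℝ → ℝ → ℝ :=
  fun t a b => fderiv ℝ H (jet2 x t a b) (0, 0, 0, 0, Pi.single α 1, 0, 0, 0)

/-- Composed partial derivative `(∂H/∂x^α_[20])[x]`. -/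
noncomputable def sl20 {n : ℕ} (H : Jet2 n → ℝ) (x : ℝ → ℝ → ℝ → Fin n → ℝ)
    (α : Fin n) : ℝ → ℝ → ℝ → ℝ :=
  fun t a b => fderiv ℝ H (jet2 x t a b) (0, 0, 0, 0, 0, Pi.single α 1, 0, 0)

/-- Composed partial derivative `(∂H/∂x^α_[11])[x]`. -/
noncomputable def sl11 {n : ℕ} (H : Jet2 n → ℝ) (x : ℝ → ℝ → ℝ → Fin n → ℝ)
    (α : Fin n) : ℝ → ℝ → ℝ → ℝ :=
  fun t a b => fderiv ℝ H (jet2 x t a b) (0, 0, 0, 0, 0, 0, Pi.single α 1, 0)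

/-- Composed partial derivative `(∂H/∂x^α_[02])[x]`. -/
noncomputable def sl02 {n : ℕ} (H : Jet2 n → ℝ) (x : ℝ → ℝ → ℝ → Fin n → ℝ)
    (α : Fin n) : ℝ → ℝ → ℝ → ℝ :=
  fun t a b => fderiv ℝ H (jet2 x t a b) (0, 0, 0, 0, 0, 0, 0, Pi.single α 1)

/-- Variational derivative `δ_α H[x]` on the two-dimensional spatial domain. -/
noncomputable def varDer2 {n : ℕ} (H : Jet2 n → ℝ) (x : ℝ → ℝ → ℝ → Fin n → ℝ)
    (α : Fin n) : ℝ → ℝ → ℝ → ℝ :=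
  fun t a b =>
    sl00 H x α t a b - dz1 (sl10 H x α) t a b - dz2 (sl01 H x α) t a b
      + dz1 (dz1 (sl20 H x α)) t a b + dz1 (dz2 (sl11 H x α)) t a b
      + dz2 (dz2 (sl02 H x α)) t a b

/-- Boundary contribution on edges with normal direction `z¹`:
`ẋ^α (H^[10]_α - ∂₁H^[20]_α - ∂₂H^[11]_α) + ẋ^α_[10] H^[20]_α` (summed over `α`). -/
noncomputable def edge1 {n : ℕ} (H : Jet2 n → ℝ) (x : ℝ → ℝ → ℝ → Fin n → ℝ) :
    ℝ → ℝ → ℝ → ℝ :=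
  fun t a b =>
    ∑ α : Fin n,
      (pt2 x t a b α * (sl10 H x α t a b - dz1 (sl20 H x α) t a b - dz2 (sl11 H x α) t a b)
        + pt2 (dz1 x) t a b α * sl20 H x α t a b)

/-- Boundary contribution on edges with normal direction `z²`:
`ẋ^α (H^[01]_α - ∂₂H^[02]_α - ∂₁H^[11]_α) + ẋ^α_[01] H^[02]_α` (summed over `α`). -/
noncomputable def edge2 {n : ℕ} (H : Jet2 n → ℝ) (x : ℝ → ℝ → ℝ → Fin n → ℝ) :
    ℝ → ℝ → ℝ → ℝ :=
  fun t a b =>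
    ∑ α : Fin n,
      (pt2 x t a b α * (sl01 H x α t a b - dz2 (sl02 H x α) t a b - dz1 (sl11 H x α) t a b)
        + pt2 (dz2 x) t a b α * sl02 H x α t a b)

/-- Corner contribution `ẋ^α H^[11]_α` (summed over `α`). -/
noncomputable def corner2 {n : ℕ} (H : Jet2 n → ℝ) (x : ℝ → ℝ → ℝ → Fin n → ℝ) :
    ℝ → ℝ → ℝ → ℝ :=
  fun t a b => ∑ α : Fin n, pt2 x t a b α * sl11 H x α t a b


def Sm {E : Type*} [NormedAddCommGroup E] [NormedSpace ℝ E] (f : ℝ → ℝ → ℝ → E) : Prop :=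
  ContDiff ℝ (⊤ : ℕ∞) (fun q : ℝ × ℝ × ℝ => f q.1 q.2.1 q.2.2)

section Aux
variable {E : Type*} [NormedAddCommGroup E] [NormedSpace ℝ E]

noncomputable def unc (f : ℝ → ℝ → ℝ → E) : ℝ × ℝ × ℝ → E := fun q => f q.1 q.2.1 q.2.2

theorem Sm.hasFDerivAt {f : ℝ → ℝ → ℝ → E} (hf : Sm f) (q : ℝ × ℝ × ℝ) :
    HasFDerivAt (unc f) (fderiv ℝ (unc f) q) q :=
  (ContDiff.differentiable hf (by simp) q).hasFDerivAt

theorem Sm.hasPt {f : ℝ → ℝ → ℝ → E} (hf : Sm f) (t a b : ℝ) :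
    HasDerivAt (fun s => f s a b) (fderiv ℝ (unc f) (t, a, b) (1, 0, 0)) t :=
  HasFDerivAt.comp_hasDerivAt (l := unc f) t (hf.hasFDerivAt (t, a, b))
    (((hasDerivAt_id t).prodMk ((hasDerivAt_const t a).prodMk (hasDerivAt_const t b))))

theorem Sm.hasD1 {f : ℝ → ℝ → ℝ → E} (hf : Sm f) (t a b : ℝ) :
    HasDerivAt (fun s => f t s b) (fderiv ℝ (unc f) (t, a, b) (0, 1, 0)) a :=
  HasFDerivAt.comp_hasDerivAt (l := unc f) a (hf.hasFDerivAt (t, a, b))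
    (((hasDerivAt_const a t).prodMk ((hasDerivAt_id a).prodMk (hasDerivAt_const a b))))

theorem Sm.hasD2 {f : ℝ → ℝ → ℝ → E} (hf : Sm f) (t a b : ℝ) :
    HasDerivAt (fun s => f t a s) (fderiv ℝ (unc f) (t, a, b) (0, 0, 1)) b :=
  HasFDerivAt.comp_hasDerivAt (l := unc f) b (hf.hasFDerivAt (t, a, b))
    (((hasDerivAt_const b t).prodMk ((hasDerivAt_const b a).prodMk (hasDerivAt_id b))))

theorem Sm.unc_pt {f : ℝ → ℝ → ℝ → E} (hf : Sm f) :
    unc (pt2 f) = fun q => fderiv ℝ (unc f) q (1, 0, 0) :=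
  funext fun q => (hf.hasPt q.1 q.2.1 q.2.2).deriv

theorem Sm.unc_d1 {f : ℝ → ℝ → ℝ → E} (hf : Sm f) :
    unc (dz1 f) = fun q => fderiv ℝ (unc f) q (0, 1, 0) :=
  funext fun q => (hf.hasD1 q.1 q.2.1 q.2.2).deriv

theorem Sm.unc_d2 {f : ℝ → ℝ → ℝ → E} (hf : Sm f) :
    unc (dz2 f) = fun q => fderiv ℝ (unc f) q (0, 0, 1) :=
  funext fun q => (hf.hasD2 q.1 q.2.1 q.2.2).deriv

theorem Sm.fd {f : ℝ → ℝ → ℝ → E} (hf : Sm f) : ContDiff ℝ (⊤ : ℕ∞) (fderiv ℝ (unc f)) :=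
  ContDiff.fderiv_right (m := (⊤ : ℕ∞)) hf (by simp)

theorem Sm.pt {f : ℝ → ℝ → ℝ → E} (hf : Sm f) : Sm (pt2 f) := by
  change ContDiff ℝ _ (unc (pt2 f))
  rw [hf.unc_pt]
  exact hf.fd.clm_apply contDiff_const

theorem Sm.d1 {f : ℝ → ℝ → ℝ → E} (hf : Sm f) : Sm (dz1 f) := by
  change ContDiff ℝ _ (unc (dz1 f))
  rw [hf.unc_d1]
  exact hf.fd.clm_apply contDiff_const

theorem Sm.d2 {f : ℝ → ℝ → ℝ → E} (hf : Sm f) : Sm (dz2 f) := by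
  change ContDiff ℝ _ (unc (dz2 f))
  rw [hf.unc_d2]
  exact hf.fd.clm_apply contDiff_const

theorem Sm.symm {f : ℝ → ℝ → ℝ → E} (hf : Sm f) (q v w : ℝ × ℝ × ℝ) :
    fderiv ℝ (fun q => fderiv ℝ (unc f) q v) q w
      = fderiv ℝ (fun q => fderiv ℝ (unc f) q w) q v := by
  have hd : DifferentiableAt ℝ (fderiv ℝ (unc f)) q := hf.fd.differentiable (by simp) q
  have h (v w : ℝ × ℝ × ℝ) : fderiv ℝ (fun q => fderiv ℝ (unc f) q v) q w
      = fderiv ℝ (fderiv ℝ (unc f)) q w v := by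
    rw [fderiv_clm_apply hd (differentiableAt_const v)]
    simp
  rw [h, h]
  have hs : IsSymmSndFDerivAt ℝ (unc f) q :=
    ContDiffAt.isSymmSndFDerivAt (n := (⊤ : ℕ∞)) (ContDiff.contDiffAt hf) (by
      simp only [minSmoothness_of_isRCLikeNormedField]; exact WithTop.coe_le_coe.2 (le_top (a := (2 : ℕ∞))))
  exact hs w v

theorem Sm.pt_d1 {f : ℝ → ℝ → ℝ → E} (hf : Sm f) : pt2 (dz1 f) = dz1 (pt2 f) := by
  funext t a b
  have h1 := congrFun hf.d1.unc_pt (t, a, b)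
  have h2 := congrFun hf.pt.unc_d1 (t, a, b)
  rw [hf.unc_d1] at h1
  rw [hf.unc_pt] at h2
  exact h1.trans ((hf.symm _ _ _).trans h2.symm)

theorem Sm.pt_d2 {f : ℝ → ℝ → ℝ → E} (hf : Sm f) : pt2 (dz2 f) = dz2 (pt2 f) := by
  funext t a b
  have h1 := congrFun hf.d2.unc_pt (t, a, b)
  have h2 := congrFun hf.pt.unc_d2 (t, a, b)
  rw [hf.unc_d2] at h1
  rw [hf.unc_pt] at h2
  exact h1.trans ((hf.symm _ _ _).trans h2.symm)

theorem Sm.d2_d1 {f : ℝ → ℝ → ℝ → E} (hf : Sm f) : dz2 (dz1 f) = dz1 (dz2 f) := by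
  funext t a b
  have h1 := congrFun hf.d1.unc_d2 (t, a, b)
  have h2 := congrFun hf.d2.unc_d1 (t, a, b)
  rw [hf.unc_d1] at h1
  rw [hf.unc_d2] at h2
  exact h1.trans ((hf.symm _ _ _).trans h2.symm)

theorem Sm.dPt {f : ℝ → ℝ → ℝ → E} (hf : Sm f) (t a b : ℝ) :
    HasDerivAt (fun s => f s a b) (pt2 f t a b) t := (hf.hasPt t a b).differentiableAt.hasDerivAt

theorem Sm.dD1 {f : ℝ → ℝ → ℝ → E} (hf : Sm f) (t a b : ℝ) :
    HasDerivAt (fun s => f t s b) (dz1 f t a b) a := (hf.hasD1 t a b).differentiableAt.hasDerivAt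

theorem Sm.dD2 {f : ℝ → ℝ → ℝ → E} (hf : Sm f) (t a b : ℝ) :
    HasDerivAt (fun s => f t a s) (dz2 f t a b) b := (hf.hasD2 t a b).differentiableAt.hasDerivAt

theorem Sm.cont {f : ℝ → ℝ → ℝ → E} (hf : Sm f) :
    Continuous (fun q : ℝ × ℝ × ℝ => f q.1 q.2.1 q.2.2) := ContDiff.continuous hf

end Aux

section Alg
variable {f g : ℝ → ℝ → ℝ → ℝ}

theorem Sm.add (hf : Sm f) (hg : Sm g) : Sm (f + g) := ContDiff.add hf hg
theorem Sm.sub (hf : Sm f) (hg : Sm g) : Sm (f - g) := ContDiff.sub hf hg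
theorem Sm.mul (hf : Sm f) (hg : Sm g) : Sm (f * g) := ContDiff.mul hf hg

theorem Sm.sum {n : ℕ} {F : Fin n → ℝ → ℝ → ℝ → ℝ} (hF : ∀ i, Sm (F i)) : Sm (∑ i, F i) := by
  have : ContDiff ℝ (⊤ : ℕ∞) (fun q : ℝ × ℝ × ℝ => ∑ i, F i q.1 q.2.1 q.2.2) :=
    ContDiff.sum fun i _ => hF i
  simpa [Sm, Finset.sum_apply] using this

theorem dz1_add (hf : Sm f) (hg : Sm g) : dz1 (f + g) = dz1 f + dz1 g := by
  funext t a b; exact ((hf.dD1 t a b).add (hg.dD1 t a b)).deriv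
theorem dz2_add (hf : Sm f) (hg : Sm g) : dz2 (f + g) = dz2 f + dz2 g := by
  funext t a b; exact ((hf.dD2 t a b).add (hg.dD2 t a b)).deriv
theorem dz1_sub (hf : Sm f) (hg : Sm g) : dz1 (f - g) = dz1 f - dz1 g := by
  funext t a b; exact ((hf.dD1 t a b).sub (hg.dD1 t a b)).deriv
theorem dz2_sub (hf : Sm f) (hg : Sm g) : dz2 (f - g) = dz2 f - dz2 g := by
  funext t a b; exact ((hf.dD2 t a b).sub (hg.dD2 t a b)).deriv
theorem dz1_mul (hf : Sm f) (hg : Sm g) : dz1 (f * g) = dz1 f * g + f * dz1 g := by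
  funext t a b; exact ((hf.dD1 t a b).mul (hg.dD1 t a b)).deriv
theorem dz2_mul (hf : Sm f) (hg : Sm g) : dz2 (f * g) = dz2 f * g + f * dz2 g := by
  funext t a b; exact ((hf.dD2 t a b).mul (hg.dD2 t a b)).deriv

theorem dz1_sum {n : ℕ} {F : Fin n → ℝ → ℝ → ℝ → ℝ} (hF : ∀ i, Sm (F i)) :
    dz1 (∑ i, F i) = ∑ i, dz1 (F i) := by
  funext t a b
  have := (HasDerivAt.fun_sum (u := Finset.univ) fun i _ => (hF i).dD1 t a b).deriv
  simpa [dz1, Finset.sum_apply] using this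
theorem dz2_sum {n : ℕ} {F : Fin n → ℝ → ℝ → ℝ → ℝ} (hF : ∀ i, Sm (F i)) :
    dz2 (∑ i, F i) = ∑ i, dz2 (F i) := by
  funext t a b
  have := (HasDerivAt.fun_sum (u := Finset.univ) fun i _ => (hF i).dD2 t a b).deriv
  simpa [dz2, Finset.sum_apply] using this

/-- the pointwise integration by parts identity -/
theorem parts_identity {y s00 s10 s01 s20 s11 s02 : ℝ → ℝ → ℝ → ℝ}
    (hy : Sm y) (h10 : Sm s10) (h01 : Sm s01) (h20 : Sm s20) (h11 : Sm s11) (h02 : Sm s02) :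
    y * s00 + dz1 y * s10 + dz2 y * s01 + dz1 (dz1 y) * s20 + dz1 (dz2 y) * s11
      + dz2 (dz2 y) * s02
    = y * (s00 - dz1 s10 - dz2 s01 + dz1 (dz1 s20) + dz1 (dz2 s11) + dz2 (dz2 s02))
      + dz1 (y * (s10 - dz1 s20 - dz2 s11) + dz1 y * s20)
      + dz2 (y * (s01 - dz2 s02 - dz1 s11) + dz2 y * s02)
      + dz1 (dz2 (y * s11)) := by
  rw [dz1_add (hy.mul ((h10.sub h20.d1).sub h11.d2)) (hy.d1.mul h20),
    dz1_mul hy ((h10.sub h20.d1).sub h11.d2), dz1_mul hy.d1 h20,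
    dz1_sub (h10.sub h20.d1) h11.d2, dz1_sub h10 h20.d1,
    dz2_add (hy.mul ((h01.sub h02.d2).sub h11.d1)) (hy.d2.mul h02),
    dz2_mul hy ((h01.sub h02.d2).sub h11.d1), dz2_mul hy.d2 h02,
    dz2_sub (h01.sub h02.d2) h11.d1, dz2_sub h01 h02.d2,
    dz2_mul hy h11, dz1_add (hy.d2.mul h11) (hy.mul h11.d2), dz1_mul hy.d2 h11,
    dz1_mul hy h11.d2, h11.d2_d1]
  ring

theorem Sm.comp1 {n : ℕ} {f : ℝ → ℝ → ℝ → Fin n → ℝ} (hf : Sm f) (α : Fin n) :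
    Sm (fun t a b => f t a b α) := contDiff_pi.1 hf α

theorem dz1_comp {n : ℕ} {f : ℝ → ℝ → ℝ → Fin n → ℝ} (hf : Sm f) (α : Fin n) :
    dz1 (fun t a b => f t a b α) = fun t a b => dz1 f t a b α := by
  funext t a b; exact (hasDerivAt_pi.1 (hf.dD1 t a b) α).deriv
theorem dz2_comp {n : ℕ} {f : ℝ → ℝ → ℝ → Fin n → ℝ} (hf : Sm f) (α : Fin n) :
    dz2 (fun t a b => f t a b α) = fun t a b => dz2 f t a b α := by
  funext t a b; exact (hasDerivAt_pi.1 (hf.dD2 t a b) α).deriv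

end Alg

section Int

theorem leib {F F' : ℝ → ℝ → ℝ} {L : ℝ} (hF : ∀ s, Continuous (F s))
    (hF' : Continuous (Function.uncurry F'))
    (hd : ∀ s a, HasDerivAt (fun s => F s a) (F' s a) s) (t : ℝ) :
    HasDerivAt (fun s => ∫ a in (0:ℝ)..L, F s a) (∫ a in (0:ℝ)..L, F' t a) t := by
  obtain ⟨C, hC⟩ := ((isCompact_closedBall t 1).prod
    (isCompact_uIcc (a := (0:ℝ)) (b := L))).exists_bound_of_continuousOn hF'.continuousOn
  refine (intervalIntegral.hasDerivAt_integral_of_dominated_loc_of_deriv_le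
    (bound := fun _ => C) (Metric.closedBall_mem_nhds t one_pos)
    (Filter.Eventually.of_forall fun s => (hF s).aestronglyMeasurable)
    ((hF t).intervalIntegrable _ _)
    (Continuous.aestronglyMeasurable (by fun_prop)) ?_ (by simp) ?_).2
  · refine Filter.Eventually.of_forall fun a ha s hs => hC (s, a) ⟨hs, Set.uIoc_subset_uIcc ha⟩
  · exact Filter.Eventually.of_forall fun a _ s _ => hd s a

theorem leib2 {f : ℝ → ℝ → ℝ → ℝ} (hf : Sm f) (L1 L2 t : ℝ) :
    HasDerivAt (fun s => ∫ a in (0:ℝ)..L1, ∫ b in (0:ℝ)..L2, f s a b)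
      (∫ a in (0:ℝ)..L1, ∫ b in (0:ℝ)..L2, pt2 f t a b) t := by
  have c := hf.cont
  have c' := hf.pt.cont
  refine leib (F := fun s a => ∫ b in (0:ℝ)..L2, f s a b)
    (F' := fun s a => ∫ b in (0:ℝ)..L2, pt2 f s a b) ?_ ?_ ?_ t
  · intro s
    apply intervalIntegral.continuous_parametric_intervalIntegral_of_continuous'
    exact c.comp (f := fun p : ℝ × ℝ => (s, p.1, p.2)) (by fun_prop)
  · apply intervalIntegral.continuous_parametric_intervalIntegral_of_continuous'
      (f := fun (p : ℝ × ℝ) b => pt2 f p.1 p.2 b)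
    exact c'.comp (f := fun p : (ℝ × ℝ) × ℝ => (p.1.1, p.1.2, p.2)) (by fun_prop)
  · intro s a
    refine leib (F := fun s b => f s a b) (F' := fun s b => pt2 f s a b) ?_ ?_ ?_ s
    · intro s
      exact c.comp (f := fun b : ℝ => (s, a, b)) (by fun_prop)
    · exact c'.comp (f := fun p : ℝ × ℝ => (p.1, a, p.2)) (by fun_prop)
    · intro s b
      exact hf.dPt s a b

theorem Sm.swap {f : ℝ → ℝ → ℝ → ℝ} (hf : Sm f) (L1 L2 t : ℝ) :
    (∫ a in (0:ℝ)..L1, ∫ b in (0:ℝ)..L2, f t a b)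
      = ∫ b in (0:ℝ)..L2, ∫ a in (0:ℝ)..L1, f t a b := by
  apply intervalIntegral_intervalIntegral_swap
  have c : Continuous (Function.uncurry fun a b => f t a b) :=
    hf.cont.comp (f := fun p : ℝ × ℝ => (t, p.1, p.2)) (by fun_prop)
  exact (c.continuousOn.integrableOn_compact (isCompact_uIcc.prod isCompact_uIcc)).mono_set
    (Set.prod_mono Set.uIoc_subset_uIcc Set.uIoc_subset_uIcc)

theorem Sm.ftc1 {f : ℝ → ℝ → ℝ → ℝ} (hf : Sm f) (L t b : ℝ) :
    (∫ a in (0:ℝ)..L, dz1 f t a b) = f t L b - f t 0 b :=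
  intervalIntegral.integral_eq_sub_of_hasDerivAt (fun a _ => hf.dD1 t a b)
    (Continuous.intervalIntegrable
      (hf.d1.cont.comp (f := fun a : ℝ => (t, a, b)) (by fun_prop)) _ _)

theorem Sm.ftc2 {f : ℝ → ℝ → ℝ → ℝ} (hf : Sm f) (L t a : ℝ) :
    (∫ b in (0:ℝ)..L, dz2 f t a b) = f t a L - f t a 0 :=
  intervalIntegral.integral_eq_sub_of_hasDerivAt (fun b _ => hf.dD2 t a b)
    (Continuous.intervalIntegrable
      (hf.d2.cont.comp (f := fun b : ℝ => (t, a, b)) (by fun_prop)) _ _)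

theorem Sm.int_in {f : ℝ → ℝ → ℝ → ℝ} (hf : Sm f) (L t a : ℝ) :
    IntervalIntegrable (fun b => f t a b) volume 0 L :=
  Continuous.intervalIntegrable
      (hf.cont.comp (f := fun b : ℝ => (t, a, b)) (by fun_prop)) _ _

theorem Sm.int_out {f : ℝ → ℝ → ℝ → ℝ} (hf : Sm f) (L1 L2 t : ℝ) :
    IntervalIntegrable (fun a => ∫ b in (0:ℝ)..L2, f t a b) volume 0 L1 := by
  apply Continuous.intervalIntegrable
  apply intervalIntegral.continuous_parametric_intervalIntegral_of_continuous'
  exact hf.cont.comp (f := fun p : ℝ × ℝ => (t, p.1, p.2)) (by fun_prop)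

theorem int2_add {f g : ℝ → ℝ → ℝ → ℝ} (hf : Sm f) (hg : Sm g) (L1 L2 t : ℝ) :
    (∫ a in (0:ℝ)..L1, ∫ b in (0:ℝ)..L2, (f + g) t a b)
      = (∫ a in (0:ℝ)..L1, ∫ b in (0:ℝ)..L2, f t a b)
        + ∫ a in (0:ℝ)..L1, ∫ b in (0:ℝ)..L2, g t a b := by
  rw [← intervalIntegral.integral_add (hf.int_out L1 L2 t) (hg.int_out L1 L2 t)]
  congr 1
  funext a
  exact intervalIntegral.integral_add (hf.int_in L2 t a) (hg.int_in L2 t a)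

end Int

section JetSec
variable {n : ℕ}

theorem slot_sum (L : Jet2 n →L[ℝ] ℝ) (ι : (Fin n → ℝ) → Jet2 n)
    (h1 : ∀ v w, ι (v + w) = ι v + ι w) (h2 : ∀ (c : ℝ) v, ι (c • v) = c • ι v)
    (v : Fin n → ℝ) : L (ι v) = ∑ α, v α * L (ι (Pi.single α 1)) := by
  let k : (Fin n → ℝ) →ₗ[ℝ] ℝ :=
    { toFun := fun v => L (ι v)
      map_add' := fun v w => by rw [h1, map_add]
      map_smul' := fun c v => by rw [h2, map_smul]; rfl }
  have h := LinearMap.pi_apply_eq_sum_univ k v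
  have e : ∀ i : Fin n, (fun j => if i = j then (1:ℝ) else 0) = Pi.single i 1 := by
    intro i; funext j; simp [Pi.single_apply, eq_comm]
  simp only [e] at h
  exact h

theorem jet_lin (L : Jet2 n →L[ℝ] ℝ) (v0 v1 v2 v3 v4 v5 : Fin n → ℝ) :
    L (0, 0, v0, v1, v2, v3, v4, v5) = ∑ α,
      (v0 α * L (0, 0, Pi.single α 1, 0, 0, 0, 0, 0)
      + v1 α * L (0, 0, 0, Pi.single α 1, 0, 0, 0, 0)
      + v2 α * L (0, 0, 0, 0, Pi.single α 1, 0, 0, 0)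
      + v3 α * L (0, 0, 0, 0, 0, Pi.single α 1, 0, 0)
      + v4 α * L (0, 0, 0, 0, 0, 0, Pi.single α 1, 0)
      + v5 α * L (0, 0, 0, 0, 0, 0, 0, Pi.single α 1)) := by
  have e : ((0, 0, v0, v1, v2, v3, v4, v5) : Jet2 n)
      = (0, 0, v0, 0, 0, 0, 0, 0) + (0, 0, 0, v1, 0, 0, 0, 0) + (0, 0, 0, 0, v2, 0, 0, 0)
        + (0, 0, 0, 0, 0, v3, 0, 0) + (0, 0, 0, 0, 0, 0, v4, 0) + (0, 0, 0, 0, 0, 0, 0, v5) := by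
    simp
  rw [e]
  simp only [map_add, Finset.sum_add_distrib]
  rw [slot_sum L (fun v => (0, 0, v, 0, 0, 0, 0, 0)) (by simp) (by simp) v0,
    slot_sum L (fun v => (0, 0, 0, v, 0, 0, 0, 0)) (by simp) (by simp) v1,
    slot_sum L (fun v => (0, 0, 0, 0, v, 0, 0, 0)) (by simp) (by simp) v2,
    slot_sum L (fun v => (0, 0, 0, 0, 0, v, 0, 0)) (by simp) (by simp) v3,
    slot_sum L (fun v => (0, 0, 0, 0, 0, 0, v, 0)) (by simp) (by simp) v4,
    slot_sum L (fun v => (0, 0, 0, 0, 0, 0, 0, v)) (by simp) (by simp) v5]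

theorem jet_sm {x : ℝ → ℝ → ℝ → Fin n → ℝ} (hx : Sm x) :
    ContDiff ℝ (⊤ : ℕ∞) (fun q : ℝ × ℝ × ℝ => jet2 x q.1 q.2.1 q.2.2) := by
  unfold jet2
  exact (contDiff_fst.comp contDiff_snd).prodMk ((contDiff_snd.comp contDiff_snd).prodMk
    (ContDiff.prodMk hx (ContDiff.prodMk hx.d1 (ContDiff.prodMk hx.d2
      (ContDiff.prodMk hx.d1.d1 (ContDiff.prodMk hx.d2.d1 hx.d2.d2))))))

theorem sl_sm {H : Jet2 n → ℝ} (hH : ContDiff ℝ (⊤ : ℕ∞) H) {x : ℝ → ℝ → ℝ → Fin n → ℝ}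
    (hx : Sm x) (v : Jet2 n) : Sm (fun t a b => fderiv ℝ H (jet2 x t a b) v) :=
  ((hH.fderiv_right (m := (⊤ : ℕ∞)) (by simp)).comp (jet_sm hx)).clm_apply contDiff_const

theorem pt_H {H : Jet2 n → ℝ} (hH : ContDiff ℝ (⊤ : ℕ∞) H) {x : ℝ → ℝ → ℝ → Fin n → ℝ}
    (hx : Sm x) (y : Fin n → ℝ → ℝ → ℝ → ℝ) (hy : y = fun α t a b => pt2 x t a b α) :
    pt2 (fun t a b => H (jet2 x t a b)) = ∑ α,
      (y α * sl00 H x α + dz1 (y α) * sl10 H x α + dz2 (y α) * sl01 H x α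
        + dz1 (dz1 (y α)) * sl20 H x α + dz1 (dz2 (y α)) * sl11 H x α
        + dz2 (dz2 (y α)) * sl02 H x α) := by
  funext t a b
  have hj : HasDerivAt (fun s => jet2 x s a b) ((0, 0, pt2 x t a b, pt2 (dz1 x) t a b,
      pt2 (dz2 x) t a b, pt2 (dz1 (dz1 x)) t a b, pt2 (dz1 (dz2 x)) t a b,
      pt2 (dz2 (dz2 x)) t a b) : Jet2 n) t := by
    unfold jet2
    exact (hasDerivAt_const t a).prodMk ((hasDerivAt_const t b).prodMk
      ((hx.dPt t a b).prodMk ((hx.d1.dPt t a b).prodMk ((hx.d2.dPt t a b).prodMk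
      ((hx.d1.d1.dPt t a b).prodMk ((hx.d2.d1.dPt t a b).prodMk (hx.d2.d2.dPt t a b)))))))
  have h := (HasFDerivAt.comp_hasDerivAt (l := H) t
    (hH.differentiable (by simp) (jet2 x t a b)).hasFDerivAt hj).deriv
  refine h.trans ?_
  rw [jet_lin, hx.d1.pt_d1, hx.pt_d1, hx.d2.pt_d1, hx.d2.pt_d2, hx.pt_d2]
  simp only [Finset.sum_apply]
  refine Finset.sum_congr rfl fun α _ => ?_
  subst hy
  have p := hx.pt
  simp only [dz1_comp p, dz2_comp p, dz1_comp p.d1, dz1_comp p.d2, dz2_comp p.d2]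
  rfl

end JetSec

theorem alg_identity {n l : ℕ} (v y : Fin n → ℝ) (J R : Fin n → Fin n → ℝ)
    (G : Fin n → Fin l → ℝ) (u : Fin l → ℝ) (hJ : ∀ α β, J α β = -J β α)
    (hy : ∀ α, y α = (∑ β, (J α β - R α β) * v β) + ∑ ξ, G α ξ * u ξ) :
    (∑ α, y α * v α) + ∑ α, ∑ β, v α * R α β * v β = ∑ ξ, u ξ * ∑ α, G α ξ * v α := by
  have hz : ∑ α, ∑ β, v α * J α β * v β = 0 := by
    have h : ∑ α, ∑ β, v α * J α β * v β = -∑ α, ∑ β, v α * J α β * v β := by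
      conv_lhs => rw [Finset.sum_comm]
      simp only [← Finset.sum_neg_distrib]
      refine Finset.sum_congr rfl fun α _ => Finset.sum_congr rfl fun β _ => ?_
      rw [hJ β α]; ring
    linarith
  have h1 : ∑ α, y α * v α = (∑ α, ∑ β, v α * J α β * v β) - (∑ α, ∑ β, v α * R α β * v β)
      + ∑ α, ∑ ξ, u ξ * (G α ξ * v α) := by
    rw [← Finset.sum_sub_distrib, ← Finset.sum_add_distrib]
    refine Finset.sum_congr rfl fun α _ => ?_
    rw [hy, add_mul, Finset.sum_mul, Finset.sum_mul, ← Finset.sum_sub_distrib]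
    congr 1
    · exact Finset.sum_congr rfl fun β _ => by ring
    · exact Finset.sum_congr rfl fun β _ => by ring
  rw [h1, hz, Finset.sum_comm (f := fun α ξ => u ξ * (G α ξ * v α))]
  simp only [Finset.mul_sum]
  ring

/-- power balance of an in-domain actuated port-Hamiltonian system
with second-order Hamiltonian density on the rectangle `B = [0,L₁] × [0,L₂]`,
with vanishing boundary contributions. -/
theorem statement2 {n l : ℕ} (L1 L2 : ℝ) (hL1 : 0 < L1) (hL2 : 0 < L2)
    (H : Jet2 n → ℝ) (hH : ContDiff ℝ (⊤ : ℕ∞) H)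
    (x : ℝ → ℝ → ℝ → Fin n → ℝ)
    (hx : ContDiff ℝ (⊤ : ℕ∞) (fun q : ℝ × ℝ × ℝ => x q.1 q.2.1 q.2.2))
    (J R : Fin n → Fin n → ℝ → ℝ → ℝ → ℝ)
    (G : Fin n → Fin l → ℝ → ℝ → ℝ → ℝ)
    (hJ : ∀ α β, ContDiff ℝ (⊤ : ℕ∞) (fun q : ℝ × ℝ × ℝ => J α β q.1 q.2.1 q.2.2))
    (hR : ∀ α β, ContDiff ℝ (⊤ : ℕ∞) (fun q : ℝ × ℝ × ℝ => R α β q.1 q.2.1 q.2.2))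
    (hG : ∀ α ξ, ContDiff ℝ (⊤ : ℕ∞) (fun q : ℝ × ℝ × ℝ => G α ξ q.1 q.2.1 q.2.2))
    (hJskew : ∀ α β t a b, J α β t a b = -J β α t a b)
    (u : Fin l → ℝ → ℝ)
    -- the port-Hamiltonian dynamics hold on `B`
    (hdyn : ∀ t, ∀ a ∈ Set.Icc (0:ℝ) L1, ∀ b ∈ Set.Icc (0:ℝ) L2, ∀ α,
      pt2 x t a b α =
        (∑ β : Fin n, (J α β t a b - R α β t a b) * varDer2 H x β t a b)
          + ∑ ξ : Fin l, G α ξ t a b * u ξ t)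
    -- the boundary contributions vanish on the edges with normal direction `z¹`
    (hb1 : ∀ t, ∀ b ∈ Set.Icc (0:ℝ) L2, edge1 H x t 0 b = 0 ∧ edge1 H x t L1 b = 0)
    -- the boundary contributions vanish on the edges with normal direction `z²`
    (hb2 : ∀ t, ∀ a ∈ Set.Icc (0:ℝ) L1, edge2 H x t a 0 = 0 ∧ edge2 H x t a L2 = 0)
    -- the corner contributions vanish
    (hcor : ∀ t, corner2 H x t 0 0 = 0 ∧ corner2 H x t L1 0 = 0
      ∧ corner2 H x t 0 L2 = 0 ∧ corner2 H x t L1 L2 = 0)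
    (t : ℝ) :
    HasDerivAt (fun τ => ∫ a in (0:ℝ)..L1, ∫ b in (0:ℝ)..L2, H (jet2 x τ a b))
      (-(∫ a in (0:ℝ)..L1, ∫ b in (0:ℝ)..L2,
          ∑ α : Fin n, ∑ β : Fin n,
            varDer2 H x α t a b * R α β t a b * varDer2 H x β t a b)
        + ∫ a in (0:ℝ)..L1, ∫ b in (0:ℝ)..L2,
            ∑ ξ : Fin l, u ξ t * (∑ α : Fin n, G α ξ t a b * varDer2 H x α t a b)) t := by
  have hx' : Sm x := hx
  obtain ⟨y, hy⟩ : ∃ y : Fin n → ℝ → ℝ → ℝ → ℝ, y = fun α t a b => pt2 x t a b α := ⟨_, rfl⟩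
  have sy : ∀ α, Sm (y α) := fun α => by rw [hy]; exact hx'.pt.comp1 α
  have s00 : ∀ α, Sm (sl00 H x α) := fun α => sl_sm hH hx' _
  have s10 : ∀ α, Sm (sl10 H x α) := fun α => sl_sm hH hx' _
  have s01 : ∀ α, Sm (sl01 H x α) := fun α => sl_sm hH hx' _
  have s20 : ∀ α, Sm (sl20 H x α) := fun α => sl_sm hH hx' _
  have s11 : ∀ α, Sm (sl11 H x α) := fun α => sl_sm hH hx' _
  have s02 : ∀ α, Sm (sl02 H x α) := fun α => sl_sm hH hx' _
  have sv : ∀ α, Sm (varDer2 H x α) := fun α =>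
    (((((s00 α).sub (s10 α).d1).sub (s01 α).d2).add (s20 α).d1.d1).add (s11 α).d2.d1).add
      (s02 α).d2.d2
  have se1 : ∀ α, Sm (y α * (sl10 H x α - dz1 (sl20 H x α) - dz2 (sl11 H x α))
      + dz1 (y α) * sl20 H x α) := fun α =>
    ((sy α).mul (((s10 α).sub (s20 α).d1).sub (s11 α).d2)).add ((sy α).d1.mul (s20 α))
  have se2 : ∀ α, Sm (y α * (sl01 H x α - dz2 (sl02 H x α) - dz1 (sl11 H x α))
      + dz2 (y α) * sl02 H x α) := fun α =>
    ((sy α).mul (((s01 α).sub (s02 α).d2).sub (s11 α).d1)).add ((sy α).d2.mul (s02 α))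
  have sc : ∀ α, Sm (y α * sl11 H x α) := fun α => (sy α).mul (s11 α)
  have e1 : edge1 H x = ∑ α, (y α * (sl10 H x α - dz1 (sl20 H x α) - dz2 (sl11 H x α))
      + dz1 (y α) * sl20 H x α) := by
    funext t a b
    simp only [Finset.sum_apply, edge1]
    refine Finset.sum_congr rfl fun α _ => ?_
    rw [hy, hx'.pt_d1]
    simp only [dz1_comp hx'.pt]
    rfl
  have e2 : edge2 H x = ∑ α, (y α * (sl01 H x α - dz2 (sl02 H x α) - dz1 (sl11 H x α))
      + dz2 (y α) * sl02 H x α) := by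
    funext t a b
    simp only [Finset.sum_apply, edge2]
    refine Finset.sum_congr rfl fun α _ => ?_
    rw [hy, hx'.pt_d2]
    simp only [dz2_comp hx'.pt]
    rfl
  have ec : corner2 H x = ∑ α, y α * sl11 H x α := by
    funext t a b
    simp only [Finset.sum_apply, corner2]
    refine Finset.sum_congr rfl fun α _ => ?_
    rw [hy]
    rfl
  have Se1 : Sm (edge1 H x) := by rw [e1]; exact Sm.sum se1
  have Se2 : Sm (edge2 H x) := by rw [e2]; exact Sm.sum se2
  have Sc : Sm (corner2 H x) := by rw [ec]; exact Sm.sum sc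
  have SY : Sm (∑ α, y α * varDer2 H x α) := Sm.sum fun α => (sy α).mul (sv α)
  have key : pt2 (fun t a b => H (jet2 x t a b)) = (∑ α, y α * varDer2 H x α)
      + dz1 (edge1 H x) + dz2 (edge2 H x) + dz1 (dz2 (corner2 H x)) := by
    rw [pt_H hH hx' y hy, e1, e2, ec, dz1_sum se1, dz2_sum se2, dz2_sum sc,
      dz1_sum (fun α => (sc α).d2), ← Finset.sum_add_distrib, ← Finset.sum_add_distrib,
      ← Finset.sum_add_distrib]
    exact Finset.sum_congr rfl fun α _ =>
      parts_identity (sy α) (s10 α) (s01 α) (s20 α) (s11 α) (s02 α)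
  have SH : Sm (fun t a b => H (jet2 x t a b)) := hH.comp (jet_sm hx')
  have hmain := leib2 SH L1 L2 t
  have i1 : (∫ a in (0:ℝ)..L1, ∫ b in (0:ℝ)..L2, dz1 (edge1 H x) t a b) = 0 := by
    rw [Se1.d1.swap]
    refine (intervalIntegral.integral_congr (g := fun _ => (0:ℝ)) fun b hb => ?_).trans (by simp)
    rw [Set.uIcc_of_le hL2.le] at hb
    simp only [Se1.ftc1, (hb1 t b hb).1, (hb1 t b hb).2, sub_zero]
  have i2 : (∫ a in (0:ℝ)..L1, ∫ b in (0:ℝ)..L2, dz2 (edge2 H x) t a b) = 0 := by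
    refine (intervalIntegral.integral_congr (g := fun _ => (0:ℝ)) fun a ha => ?_).trans (by simp)
    rw [Set.uIcc_of_le hL1.le] at ha
    simp only [Se2.ftc2, (hb2 t a ha).1, (hb2 t a ha).2, sub_zero]
  have i3 : (∫ a in (0:ℝ)..L1, ∫ b in (0:ℝ)..L2, dz1 (dz2 (corner2 H x)) t a b) = 0 := by
    obtain ⟨c1, c2, c3, c4⟩ := hcor t
    rw [Sc.d2.d1.swap]
    simp only [Sc.d2.ftc1]
    rw [intervalIntegral.integral_sub (Sc.d2.int_in L2 t L1) (Sc.d2.int_in L2 t 0),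
      Sc.ftc2, Sc.ftc2, c1, c2, c3, c4]
    simp
  rw [key, int2_add ((SY.add Se1.d1).add Se2.d2) Sc.d2.d1, int2_add (SY.add Se1.d1) Se2.d2,
    int2_add SY Se1.d1, i1, i2, i3] at hmain
  refine hmain.congr_deriv ?_
  have SA : Sm (fun t a b => ∑ α : Fin n, ∑ β : Fin n,
      varDer2 H x α t a b * R α β t a b * varDer2 H x β t a b) :=
    ContDiff.sum fun α _ => ContDiff.sum fun β _ =>
      ContDiff.mul (ContDiff.mul (sv α) (hR α β)) (sv β)
  have hadd := int2_add SY SA L1 L2 t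
  have hc : (∫ a in (0:ℝ)..L1, ∫ b in (0:ℝ)..L2, ((∑ α, y α * varDer2 H x α) +
      (fun t a b => ∑ α : Fin n, ∑ β : Fin n,
      varDer2 H x α t a b * R α β t a b * varDer2 H x β t a b)) t a b)
      = ∫ a in (0:ℝ)..L1, ∫ b in (0:ℝ)..L2,
            ∑ ξ : Fin l, u ξ t * (∑ α : Fin n, G α ξ t a b * varDer2 H x α t a b) := by
    refine intervalIntegral.integral_congr fun a ha => intervalIntegral.integral_congr
      fun b hb => ?_
    rw [Set.uIcc_of_le hL1.le] at ha
    rw [Set.uIcc_of_le hL2.le] at hb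
    have := alg_identity (fun α => varDer2 H x α t a b) (fun α => y α t a b)
      (fun α β => J α β t a b) (fun α β => R α β t a b) (fun α ξ => G α ξ t a b)
      (fun ξ => u ξ t) (fun α β => hJskew α β t a b)
      (fun α => by rw [hy]; exact hdyn t a ha b hb α)
    simpa [Finset.sum_apply] using this
  rw [hc] at hadd
  linarith
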